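/- Let m_LS, m_S, β, α, x be real numbers with m_LS > 0, m_S ≥ 0, β ≥ 1, 0 < α ≤ 1, and x ≥ α·m_LS. Then x/2 + (2β−1)·m_LS/2 + (2/3)·m_S ≥ min((α + 2β − 1)/(2β), 2/3) · (β·m_LS + m_S). -/

import Mathlib

/-!
The `x` mixed bins together with the `((2 * β - 1) * mLS - x) / 2` bins of two large items number
`x / 2 + (2 * β - 1) * mLS / 2`. For `x ≥ α * mLS` this is at least the fraction
`(α + 2 * β - 1) / (2 * β)` of the `β * mLS` optimal bins containing large items, while the fraction
covered of the remaining `mS` optimal bins is `2 / 3`; overall, at least the smaller of the two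
fractions is covered.
-/

theorem min_mul_add_le_mul_add_mul {R : Type*} [Semiring R] [LinearOrder R] [IsOrderedRing R]
    {a b : R} (c d : R) (ha : 0 ≤ a) (hb : 0 ≤ b) :
    min c d * (a + b) ≤ c * a + d * b := by
  rw [mul_add]
  gcongr
  · exact min_le_left c d
  · exact min_le_right c d

section CoveringRatio

variable {K : Type*} [Field K] [LinearOrder K] [IsStrictOrderedRing K] {mLS mS β α x : K}

theorem large_ratio_mul_le_covered_large (hβ : β ≠ 0) (hx : α * mLS ≤ x) :
    (α + 2 * β - 1) / (2 * β) * (β * mLS) ≤ x / 2 + (2 * β - 1) * mLS / 2 :=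
  calc
    (α + 2 * β - 1) / (2 * β) * (β * mLS) = α * mLS / 2 + (2 * β - 1) * mLS / 2 := by
      field_simp
      ring
    _ ≤ x / 2 + (2 * β - 1) * mLS / 2 := by gcongr

theorem stmt1_general (r : K) (hLS : 0 ≤ mLS) (hS : 0 ≤ mS) (hβ : 0 < β) (hx : α * mLS ≤ x) :
    min ((α + 2 * β - 1) / (2 * β)) r * (β * mLS + mS) ≤
      x / 2 + (2 * β - 1) * mLS / 2 + r * mS :=
  calc
    min ((α + 2 * β - 1) / (2 * β)) r * (β * mLS + mS)
        ≤ (α + 2 * β - 1) / (2 * β) * (β * mLS) + r * mS :=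
      min_mul_add_le_mul_add_mul _ r (mul_nonneg hβ.le hLS) hS
    _ ≤ x / 2 + (2 * β - 1) * mLS / 2 + r * mS := by
      gcongr
      exact large_ratio_mul_le_covered_large hβ.ne' hx

end CoveringRatio

theorem stmt1 (mLS mS β α x : ℝ) (h1 : 0 < mLS) (h2 : 0 ≤ mS) (h3 : 1 ≤ β)
    (h4 : 0 < α) (h5 : α ≤ 1) (h6 : x ≥ α * mLS) :
    x / 2 + (2 * β - 1) * mLS / 2 + (2 / 3) * mS ≥
      min ((α + 2 * β - 1) / (2 * β)) (2 / 3) * (β * mLS + mS) :=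
  stmt1_general (2 / 3) h1.le h2 (zero_lt_one.trans_le h3) h6
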